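/- In the precision-test setup, for every x > 0 the local power differences satisfy: Π₁(x) − Π₂(x) = −(α₃ε/α₂) g_{5,λ}(x) + (α₃ε³/3) g_{7,λ}(x); Π₁(x) − Π₃(x) = ((2α₃ − 3α₂′)ε/α₂) g_{5,λ}(x) − ((2α₃ − 3α₂′)ε³/3) g_{7,λ}(x); Π₁(x) − Π₄(x) = (α₃ε/(2α₂)) g_{5,λ}(x) − (α₃ε³/6) g_{7,λ}(x); Π₂(x) − Π₃(x) = (3(α₃ − α₂′)ε/α₂) g_{5,λ}(x) − (α₃ − α₂′)ε³ g_{7,λ}(x); Π₂(x) − Π₄(x) = (3α₃ε/(2α₂)) g_{5,λ}(x) − (α₃ε³/2) g_{7,λ}(x); Π₃(x) − Π₄(x) = −(3(α₃ − 2α₂′)ε/(2α₂)) g_{5,λ}(x) + ((α₃ − 2α₂′)ε³/2) g_{7,λ}(x). -/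

import Mathlib

/-!
The chi-square densities satisfy `f_{m+2}' = (f_m - f_{m+2}) / 2` on `(0, ∞)` and `f_{m+2}(0) = 0`,
so `∫₀ˣ f_m - ∫₀ˣ f_{m+2} = 2 f_{m+2}(x)` (`integral_chisqPDF_sub`). In particular `∫₀ˣ f_m`
decreases when `m` grows by `2`, so the Poisson mixture may be integrated term by term
(`hasSum_ncChisqCDF`), giving `G_{m,λ} - G_{m+2,λ} = 2 g_{m+2,λ}` (`ncChisqCDF_sub`).

For any two of the tests the coefficients of `G_{1,λ}` agree, so each power difference is a
combination of `G_{3,λ} - G_{5,λ}` and `G_{5,λ} - G_{7,λ}`, that is, of `g_{5,λ}` and `g_{7,λ}`.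
Only `m ≥ 3` is needed, where `f_m` is continuous on `[0, ∞)`.
-/

/-- The chi-square density with `m` degrees of freedom:
`f_m(x) = x^(m/2-1) e^(-x/2) / (2^(m/2) Γ(m/2))` for `x > 0`, and `0` otherwise. -/
noncomputable def chisqPDF (m : ℕ) (x : ℝ) : ℝ :=
  if 0 < x then
    x ^ ((m : ℝ) / 2 - 1) * Real.exp (-x / 2) /
      (2 ^ ((m : ℝ) / 2) * Real.Gamma ((m : ℝ) / 2))
  else 0

/-- The noncentral chi-square density with `m` degrees of freedom and
noncentrality parameter `lam`:
`g_{m,λ}(x) = Σ_{j=0}^∞ [e^{-λ/2} (λ/2)^j / j!] f_{m+2j}(x)`. -/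
noncomputable def ncChisqPDF (m : ℕ) (lam x : ℝ) : ℝ :=
  ∑' j : ℕ, Real.exp (-lam / 2) * (lam / 2) ^ j / (Nat.factorial j : ℝ) *
    chisqPDF (m + 2 * j) x

/-- The noncentral chi-square distribution function
`G_{m,λ}(x) = ∫_0^x g_{m,λ}(u) du`. -/
noncomputable def ncChisqCDF (m : ℕ) (lam x : ℝ) : ℝ :=
  ∫ u in (0 : ℝ)..x, ncChisqPDF m lam u

/-- The order-`n^{-1/2}` local power `1 - G_{1,λ}(x) - Σ_{k=0}^3 b_k G_{1+2k,λ}(x)`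
of a test whose expansion coefficients are `b₀ = -(b₁+b₂+b₃), b₁, b₂, b₃`. -/
noncomputable def localPower (b1 b2 b3 lam x : ℝ) : ℝ :=
  1 - ncChisqCDF 1 lam x -
    (-(b1 + b2 + b3) * ncChisqCDF 1 lam x + b1 * ncChisqCDF 3 lam x +
      b2 * ncChisqCDF 5 lam x + b3 * ncChisqCDF 7 lam x)

/-- Local power `Π₁` of the likelihood ratio test of `H₀ : φ = φ₀` in a
dispersion model, with `λ = -α₂ ε²`. -/
noncomputable def PiLR (α₂ α₂' α₃ ε φ : ℝ) (p : ℕ) (x : ℝ) : ℝ :=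
  localPower ((α₂' - α₃) * ε ^ 3 / 2 + p * ε / (2 * φ))
    ((2 * α₃ - 3 * α₂') * ε ^ 3 / 6) 0 (-α₂ * ε ^ 2) x

/-- Local power `Π₂` of the Wald test of `H₀ : φ = φ₀` in a dispersion model. -/
noncomputable def PiWald (α₂ α₂' α₃ ε φ : ℝ) (p : ℕ) (x : ℝ) : ℝ :=
  localPower ((α₂' - α₃) * ε ^ 3 / 2 - α₃ * ε / (2 * α₂) + p * ε / (2 * φ))
    (-((α₂' - α₃) * ε ^ 3) / 2 + α₃ * ε / (2 * α₂)) (-(α₃ * ε ^ 3) / 6)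
    (-α₂ * ε ^ 2) x

/-- Local power `Π₃` of the score test of `H₀ : φ = φ₀` in a dispersion model. -/
noncomputable def PiScore (α₂ α₂' α₃ ε φ : ℝ) (p : ℕ) (x : ℝ) : ℝ :=
  localPower ((α₂' - α₃) * ε ^ 3 / 2 + (2 * α₃ - 3 * α₂') * ε / (2 * α₂) + p * ε / (2 * φ))
    (-((2 * α₃ - 3 * α₂') * ε) / (2 * α₂)) ((2 * α₃ - 3 * α₂') * ε ^ 3 / 6)
    (-α₂ * ε ^ 2) x

/-- Local power `Π₄` of the gradient test of `H₀ : φ = φ₀` in a dispersion model. -/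
noncomputable def PiGrad (α₂ α₂' α₃ ε φ : ℝ) (p : ℕ) (x : ℝ) : ℝ :=
  localPower ((α₂' - α₃) * ε ^ 3 / 2 + α₃ * ε / (4 * α₂) + p * ε / (2 * φ))
    (-((2 * α₂' - α₃) * ε ^ 3) / 4 - α₃ * ε / (4 * α₂)) (α₃ * ε ^ 3 / 12)
    (-α₂ * ε ^ 2) x

lemma chisqPDF_nonneg (m : ℕ) (x : ℝ) : 0 ≤ chisqPDF m x := by
  unfold chisqPDF
  split_ifs with h
  · have : 0 ≤ Real.Gamma ((m : ℝ) / 2) := Real.Gamma_nonneg_of_nonneg (by positivity)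
    positivity
  · exact le_rfl

/-- For `m ≥ 3` the exponent `m / 2 - 1` is positive, so the power vanishes at `0` and the closed
form of the density holds there as well. -/
lemma chisqPDF_of_nonneg {m : ℕ} (hm : 3 ≤ m) {x : ℝ} (hx : 0 ≤ x) :
    chisqPDF m x = x ^ ((m : ℝ) / 2 - 1) * Real.exp (-x / 2) /
      (2 ^ ((m : ℝ) / 2) * Real.Gamma ((m : ℝ) / 2)) := by
  have hm' : (3 : ℝ) ≤ m := by exact_mod_cast hm
  rcases hx.eq_or_lt with rfl | h
  · rw [Real.zero_rpow (by linarith)]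
    simp [chisqPDF]
  · simp [chisqPDF, h]

lemma continuousOn_chisqPDF {m : ℕ} (hm : 3 ≤ m) (x : ℝ) :
    ContinuousOn (chisqPDF m) (Set.Icc 0 x) := by
  have hm' : (3 : ℝ) ≤ m := by exact_mod_cast hm
  have h : Continuous fun u : ℝ => u ^ ((m : ℝ) / 2 - 1) * Real.exp (-u / 2) /
      (2 ^ ((m : ℝ) / 2) * Real.Gamma ((m : ℝ) / 2)) :=
    ((Real.continuous_rpow_const (by linarith)).mul (by fun_prop)).div_const _
  exact h.continuousOn.congr fun u hu => chisqPDF_of_nonneg hm hu.1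

lemma intervalIntegrable_chisqPDF {m : ℕ} (hm : 3 ≤ m) {x : ℝ} (hx : 0 ≤ x) :
    IntervalIntegrable (chisqPDF m) MeasureTheory.volume 0 x :=
  (continuousOn_chisqPDF hm x).intervalIntegrable_of_Icc hx

lemma hasDerivAt_chisqPDF {m : ℕ} (hm : 3 ≤ m) {x : ℝ} (hx : 0 < x) :
    HasDerivAt (chisqPDF (m + 2)) ((chisqPDF m x - chisqPDF (m + 2) x) / 2) x := by
  have hm' : (3 : ℝ) ≤ m := by exact_mod_cast hm
  have h1 : HasDerivAt (fun u : ℝ => u ^ ((m : ℝ) / 2))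
      ((m : ℝ) / 2 * x ^ ((m : ℝ) / 2 - 1)) x := Real.hasDerivAt_rpow_const (Or.inl hx.ne')
  have h2 : HasDerivAt (fun u : ℝ => Real.exp (-u / 2)) (Real.exp (-x / 2) * (-1 / 2)) x :=
    (((hasDerivAt_id x).neg).div_const 2).exp
  have h3 := (h1.mul h2).div_const (2 ^ ((m : ℝ) / 2 + 1) * Real.Gamma ((m : ℝ) / 2 + 1))
  have e1 : ((m + 2 : ℕ) : ℝ) / 2 = (m : ℝ) / 2 + 1 := by push_cast; ring
  have hG : Real.Gamma ((m : ℝ) / 2) ≠ 0 := (Real.Gamma_pos_of_pos (by linarith)).ne'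
  have hP : (2 : ℝ) ^ ((m : ℝ) / 2) ≠ 0 := (Real.rpow_pos_of_pos two_pos _).ne'
  have hm0 : (m : ℝ) ≠ 0 := by linarith
  refine (h3.congr_of_eventuallyEq ?_).congr_deriv ?_
  · filter_upwards [lt_mem_nhds hx] with u hu
    rw [chisqPDF_of_nonneg (by omega) hu.le, e1, add_sub_cancel_right]
    rfl
  · rw [chisqPDF_of_nonneg (by omega) hx.le, chisqPDF_of_nonneg (by omega) hx.le, e1,
      add_sub_cancel_right, Real.Gamma_add_one (by positivity), Real.rpow_add two_pos,
      Real.rpow_one]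
    field_simp
    ring

lemma integral_chisqPDF_sub {m : ℕ} (hm : 3 ≤ m) {x : ℝ} (hx : 0 ≤ x) :
    (∫ u in (0 : ℝ)..x, chisqPDF m u) - (∫ u in (0 : ℝ)..x, chisqPDF (m + 2) u) =
      2 * chisqPDF (m + 2) x := by
  have i1 := intervalIntegrable_chisqPDF hm hx
  have i2 := intervalIntegrable_chisqPDF (m := m + 2) (by omega) hx
  have h := intervalIntegral.integral_eq_sub_of_hasDerivAt_of_le hx
    (continuousOn_chisqPDF (m := m + 2) (by omega) x)
    (fun u hu => hasDerivAt_chisqPDF hm hu.1) ((i1.sub i2).div_const 2)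
  have h0 : chisqPDF (m + 2) 0 = 0 := by simp [chisqPDF]
  rw [intervalIntegral.integral_div, intervalIntegral.integral_sub i1 i2, h0] at h
  linarith

lemma integral_chisqPDF_le {m : ℕ} (hm : 3 ≤ m) {x : ℝ} (hx : 0 ≤ x) (j : ℕ) :
    (∫ u in (0 : ℝ)..x, chisqPDF (m + 2 * j) u) ≤ ∫ u in (0 : ℝ)..x, chisqPDF m u := by
  induction j with
  | zero => simp
  | succ k ih =>
    have h := integral_chisqPDF_sub (m := m + 2 * k) (by omega) hx
    have h' := chisqPDF_nonneg (m + 2 * k + 2) x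
    rw [show m + 2 * (k + 1) = m + 2 * k + 2 by ring]
    linarith

/-- Term-by-term integration of the Poisson mixture: the integrals of the terms are dominated by
the Poisson weights times the constant `∫₀ˣ f_m`. -/
lemma hasSum_ncChisqCDF {m : ℕ} (hm : 3 ≤ m) {lam x : ℝ} (hl : 0 ≤ lam) (hx : 0 ≤ x) :
    HasSum (fun j : ℕ => Real.exp (-lam / 2) * (lam / 2) ^ j / (Nat.factorial j : ℝ) *
      ∫ u in (0 : ℝ)..x, chisqPDF (m + 2 * j) u) (ncChisqCDF m lam x) := by
  have hw : ∀ j : ℕ, 0 ≤ Real.exp (-lam / 2) * (lam / 2) ^ j / (Nat.factorial j : ℝ) :=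
    fun j => by positivity
  have hint : ∀ j : ℕ, MeasureTheory.Integrable (fun u =>
      Real.exp (-lam / 2) * (lam / 2) ^ j / (Nat.factorial j : ℝ) * chisqPDF (m + 2 * j) u)
      (MeasureTheory.volume.restrict (Set.Ioc 0 x)) := fun j =>
    ((intervalIntegrable_iff_integrableOn_Ioc_of_le hx).1
      (intervalIntegrable_chisqPDF (m := m + 2 * j) (by omega) hx)).const_mul _
  have hsum : Summable fun j : ℕ =>
      Real.exp (-lam / 2) * (lam / 2) ^ j / (Nat.factorial j : ℝ) := by
    simpa only [mul_div_assoc] using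
      (Real.summable_pow_div_factorial (lam / 2)).mul_left (Real.exp (-lam / 2))
  have key := MeasureTheory.hasSum_integral_of_summable_integral_norm hint (by
    refine Summable.of_nonneg_of_le (fun j => by positivity) (fun j => ?_)
      (hsum.mul_right (∫ u in (0 : ℝ)..x, chisqPDF m u))
    simp only [Real.norm_of_nonneg (mul_nonneg (hw j) (chisqPDF_nonneg _ _))]
    rw [MeasureTheory.integral_const_mul, ← intervalIntegral.integral_of_le hx]
    exact mul_le_mul_of_nonneg_left (integral_chisqPDF_le hm hx j) (hw j))
  simp only [← intervalIntegral.integral_of_le hx, intervalIntegral.integral_const_mul] at key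
  exact key

lemma ncChisqCDF_sub {m : ℕ} (hm : 3 ≤ m) {lam x : ℝ} (hl : 0 ≤ lam) (hx : 0 ≤ x) :
    ncChisqCDF m lam x - ncChisqCDF (m + 2) lam x = 2 * ncChisqPDF (m + 2) lam x := by
  have h := (hasSum_ncChisqCDF hm hl hx).sub (hasSum_ncChisqCDF (m := m + 2) (by omega) hl hx)
  rw [ncChisqPDF, ← tsum_mul_left, ← h.tsum_eq]
  refine tsum_congr fun j => ?_
  have e := integral_chisqPDF_sub (m := m + 2 * j) (by omega) hx
  rw [show m + 2 + 2 * j = m + 2 * j + 2 by ring, ← mul_sub, e]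
  ring

/-- **Local power differences for tests on the precision parameter.**
For every `x > 0`, the order-`n^{-1/2}` local powers of the likelihood ratio
(`Π₁`), Wald (`Π₂`), score (`Π₃`) and gradient (`Π₄`) tests of `H₀ : φ = φ₀`
satisfy the six pairwise difference formulas in terms of the noncentral
chi-square densities `g_{5,λ}` and `g_{7,λ}` with `λ = -α₂ ε²`. -/
theorem precision_local_power_differences (α₂ α₂' α₃ ε φ : ℝ) (hα₂ : α₂ < 0)
    (hφ : 0 < φ) (p : ℕ) (hp : 1 ≤ p) (x : ℝ) (hx : 0 < x) :
    (PiLR α₂ α₂' α₃ ε φ p x - PiWald α₂ α₂' α₃ ε φ p x =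
      -(α₃ * ε / α₂) * ncChisqPDF 5 (-α₂ * ε ^ 2) x +
        α₃ * ε ^ 3 / 3 * ncChisqPDF 7 (-α₂ * ε ^ 2) x) ∧
    (PiLR α₂ α₂' α₃ ε φ p x - PiScore α₂ α₂' α₃ ε φ p x =
      (2 * α₃ - 3 * α₂') * ε / α₂ * ncChisqPDF 5 (-α₂ * ε ^ 2) x -
        (2 * α₃ - 3 * α₂') * ε ^ 3 / 3 * ncChisqPDF 7 (-α₂ * ε ^ 2) x) ∧
    (PiLR α₂ α₂' α₃ ε φ p x - PiGrad α₂ α₂' α₃ ε φ p x =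
      α₃ * ε / (2 * α₂) * ncChisqPDF 5 (-α₂ * ε ^ 2) x -
        α₃ * ε ^ 3 / 6 * ncChisqPDF 7 (-α₂ * ε ^ 2) x) ∧
    (PiWald α₂ α₂' α₃ ε φ p x - PiScore α₂ α₂' α₃ ε φ p x =
      3 * (α₃ - α₂') * ε / α₂ * ncChisqPDF 5 (-α₂ * ε ^ 2) x -
        (α₃ - α₂') * ε ^ 3 * ncChisqPDF 7 (-α₂ * ε ^ 2) x) ∧
    (PiWald α₂ α₂' α₃ ε φ p x - PiGrad α₂ α₂' α₃ ε φ p x =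
      3 * α₃ * ε / (2 * α₂) * ncChisqPDF 5 (-α₂ * ε ^ 2) x -
        α₃ * ε ^ 3 / 2 * ncChisqPDF 7 (-α₂ * ε ^ 2) x) ∧
    (PiScore α₂ α₂' α₃ ε φ p x - PiGrad α₂ α₂' α₃ ε φ p x =
      -(3 * (α₃ - 2 * α₂') * ε / (2 * α₂)) * ncChisqPDF 5 (-α₂ * ε ^ 2) x +
        (α₃ - 2 * α₂') * ε ^ 3 / 2 * ncChisqPDF 7 (-α₂ * ε ^ 2) x) := by
  have hl : 0 ≤ -α₂ * ε ^ 2 := mul_nonneg (by linarith) (sq_nonneg ε)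
  have h5 := ncChisqCDF_sub (m := 3) le_rfl hl hx.le
  have h7 := ncChisqCDF_sub (m := 5) (by norm_num) hl hx.le
  norm_num only at h5 h7
  have e5 : ncChisqPDF 5 (-α₂ * ε ^ 2) x =
      (ncChisqCDF 3 (-α₂ * ε ^ 2) x - ncChisqCDF 5 (-α₂ * ε ^ 2) x) / 2 := by linarith
  have e7 : ncChisqPDF 7 (-α₂ * ε ^ 2) x =
      (ncChisqCDF 5 (-α₂ * ε ^ 2) x - ncChisqCDF 7 (-α₂ * ε ^ 2) x) / 2 := by linarith
  rw [e5, e7]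
  unfold PiLR PiWald PiScore PiGrad localPower
  refine ⟨?_, ?_, ?_, ?_, ?_, ?_⟩ <;> ring
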